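/- (Baccari–Trad) Let x* be a local minimizer of (NLP). Assume MFCQ holds at x* and that Λ(x*) is a line segment, i.e. there exist (λ⁰,μ⁰), (λ¹,μ¹) such that Λ(x*) = {(1−t)(λ⁰,μ⁰) + t(λ¹,μ¹) : t ∈ [0,1]}. Then for every first-order cone K contained in the critical cone C(x*) there exists a Lagrange multiplier (λᴷ,μᴷ) ∈ Λ(x*) such that dᵀ∇²ₓₓL(x*,λᴷ,μᴷ)d ≥ 0 for all d ∈ K. -/

import Mathlib

open scoped BigOperators Pointwise
open Matrix

attribute [local instance] Classical.propDecidable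

noncomputable section

/-- The gradient vector of `φ` at `x` (the vector of partial derivatives). -/
def gradVec {n : ℕ} (φ : (Fin n → ℝ) → ℝ) (x : Fin n → ℝ) : Fin n → ℝ :=
  fun k => fderiv ℝ φ x (Pi.single k 1)

/-- The quadratic form `d ↦ dᵀ ∇²φ(x) d` of the Hessian of `φ` at `x`. -/
def hessQ {n : ℕ} (φ : (Fin n → ℝ) → ℝ) (x d : Fin n → ℝ) : ℝ :=
  iteratedFDeriv ℝ 2 φ x ![d, d]

/-- Feasibility for the problem (NLP). -/
def Feas {n m p : ℕ} (h : Fin m → (Fin n → ℝ) → ℝ) (g : Fin p → (Fin n → ℝ) → ℝ)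
    (x : Fin n → ℝ) : Prop :=
  (∀ i, h i x = 0) ∧ ∀ j, g j x ≤ 0

/-- The Lagrangian of (NLP). -/
def Lagr {n m p : ℕ} (f : (Fin n → ℝ) → ℝ) (h : Fin m → (Fin n → ℝ) → ℝ)
    (g : Fin p → (Fin n → ℝ) → ℝ) (lam : Fin m → ℝ) (mu : Fin p → ℝ) (x : Fin n → ℝ) : ℝ :=
  f x + ∑ i, lam i * h i x + ∑ j, mu j * g j x

/-- `(lam, mu)` is a Lagrange multiplier at `xs`, i.e. `(lam, mu) ∈ Λ(xs)`. -/
def IsLagMult {n m p : ℕ} (f : (Fin n → ℝ) → ℝ) (h : Fin m → (Fin n → ℝ) → ℝ)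
    (g : Fin p → (Fin n → ℝ) → ℝ) (xs : Fin n → ℝ) (lam : Fin m → ℝ) (mu : Fin p → ℝ) : Prop :=
  (∀ j, 0 ≤ mu j) ∧ fderiv ℝ (Lagr f h g lam mu) xs = 0 ∧ ∀ j, mu j * g j xs = 0

/-- The Mangasarian-Fromovitz constraint qualification at `xs`. -/
def MFCQ {n m p : ℕ} (h : Fin m → (Fin n → ℝ) → ℝ) (g : Fin p → (Fin n → ℝ) → ℝ)
    (xs : Fin n → ℝ) : Prop :=
  LinearIndependent ℝ (fun i : Fin m => fderiv ℝ (h i) xs) ∧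
  ∃ d : Fin n → ℝ, (∀ i, fderiv ℝ (h i) xs d = 0) ∧
    ∀ j, g j xs = 0 → fderiv ℝ (g j) xs d < 0

/-- Membership in the critical cone `C(xs)`. -/
def critCone {n m p : ℕ} (f : (Fin n → ℝ) → ℝ) (h : Fin m → (Fin n → ℝ) → ℝ)
    (g : Fin p → (Fin n → ℝ) → ℝ) (xs d : Fin n → ℝ) : Prop :=
  fderiv ℝ f xs d = 0 ∧ (∀ i, fderiv ℝ (h i) xs d = 0) ∧
    ∀ j, g j xs = 0 → fderiv ℝ (g j) xs d ≤ 0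

/-- Membership in the critical subspace `S(xs)`. -/
def critSub {n m p : ℕ} (h : Fin m → (Fin n → ℝ) → ℝ) (g : Fin p → (Fin n → ℝ) → ℝ)
    (xs d : Fin n → ℝ) : Prop :=
  (∀ i, fderiv ℝ (h i) xs d = 0) ∧ ∀ j, g j xs = 0 → fderiv ℝ (g j) xs d = 0

/-- The Jacobian matrix `J(x)` of equality and active inequality constraints
(activity taken at the base point `xs`). -/
def Jac {n m p : ℕ} (h : Fin m → (Fin n → ℝ) → ℝ) (g : Fin p → (Fin n → ℝ) → ℝ)
    (xs x : Fin n → ℝ) : Matrix (Fin m ⊕ {j : Fin p // g j xs = 0}) (Fin n) ℝ :=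
  Matrix.of fun i k =>
    Sum.elim (fun i' => fderiv ℝ (h i') x (Pi.single k 1))
      (fun j' => fderiv ℝ (g j'.1) x (Pi.single k 1)) i

/-- A first-order cone: the (direct) sum of a linear subspace and a ray. -/
def IsFirstOrderCone {n : ℕ} (K : Set (Fin n → ℝ)) : Prop :=
  ∃ (W : Submodule ℝ (Fin n → ℝ)) (d0 : Fin n → ℝ),
    K = {x | ∃ w ∈ W, ∃ r : ℝ, 0 ≤ r ∧ x = w + r • d0}

/-- The rank of a family of vectors: the dimension of its linear span. -/
def famRank {ι : Type*} {n : ℕ} (v : ι → (Fin n → ℝ)) : ℕ :=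
  Module.finrank ℝ (Submodule.span ℝ (Set.range v))

/-!
Let `x` be the minimizer. Minimality along feasible arcs `x + t d + (t² / 2) z + o(t²)`, together
with convex duality in `z`, for which MFCQ is Slater's condition, gives for each critical direction
`d` a multiplier whose Hessian is nonnegative at `d`. If the multipliers form a segment, the Hessian
is affine along it, so at every critical `d` the form of one of the two endpoints is nonnegative;
both forms being even, this extends to the linear span of a first-order cone of critical directions.
Yuan's lemma then provides a single convex combination of the two forms that is nonnegative there.
-/

open Filter Topology Asymptotics Set

section YuanLemma

theorem quadraticForm_smul_add_smul {R V : Type*} [CommRing R] [AddCommGroup V] [Module R V]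
    (Q : QuadraticForm R V) (a b : R) (x y : V) :
    Q (a • x + b • y) = a ^ 2 * Q x + a * b * QuadraticMap.polar Q x y + b ^ 2 * Q y := by
  simp only [QuadraticMap.map_add Q, QuadraticMap.map_smul, QuadraticMap.polar_smul_left,
    QuadraticMap.polar_smul_right, smul_eq_mul]
  ring

variable {V : Type*} [AddCommGroup V] [Module ℝ V]

theorem isOpen_setOf_quadraticForm_segment_neg (Q : QuadraticForm ℝ V) (x y : V) :
    IsOpen {s : ℝ | Q ((1 - s) • x + s • y) < 0} := by
  simp only [quadraticForm_smul_add_smul]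
  exact isOpen_lt (by fun_prop) continuous_const

theorem quadraticForm_segment_neg_of_polar_nonpos {Q : QuadraticForm ℝ V} {x y : V}
    (hx : Q x < 0) (hy : Q y < 0) (hxy : QuadraticMap.polar Q x y ≤ 0) {s : ℝ}
    (hs : s ∈ Icc (0 : ℝ) 1) : Q ((1 - s) • x + s • y) < 0 := by
  rw [quadraticForm_smul_add_smul]
  have hcross : (1 - s) * s * QuadraticMap.polar Q x y ≤ 0 :=
    mul_nonpos_of_nonneg_of_nonpos (mul_nonneg (sub_nonneg.2 hs.2) hs.1) hxy
  rcases hs.1.eq_or_lt with rfl | hpos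
  · simpa using hx
  · have hleft : (1 - s) ^ 2 * Q x ≤ 0 := mul_nonpos_of_nonneg_of_nonpos (sq_nonneg _) hx.le
    have hright : s ^ 2 * Q y < 0 := mul_neg_of_pos_of_neg (pow_pos hpos 2) hy
    linarith

-- Up to replacing `y` by `-y`, the form `Q` is negative on the whole segment from `x` to `y`.
-- The sets where `A` and where `B` is negative cover this segment, so by connectedness they meet.
theorem exists_quadraticForm_neg_and_neg {Q A B : QuadraticForm ℝ V} {x y : V}
    (hQ : ∀ z, Q z < 0 → A z < 0 ∨ B z < 0) (hQx : Q x < 0) (hQy : Q y < 0)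
    (hAx : A x < 0) (hBy : B y < 0) : ∃ z, A z < 0 ∧ B z < 0 := by
  wlog hxy : QuadraticMap.polar Q x y ≤ 0 generalizing y
  · refine this (y := -y) (by rwa [QuadraticMap.map_neg]) (by rwa [QuadraticMap.map_neg]) ?_
    rw [QuadraticMap.polar_neg_right]
    linarith
  obtain ⟨s, -, hs⟩ := isPreconnected_Icc (a := (0 : ℝ)) (b := 1) _ _
    (isOpen_setOf_quadraticForm_segment_neg A x y) (isOpen_setOf_quadraticForm_segment_neg B x y)
    (fun s hs => hQ _ (quadraticForm_segment_neg_of_polar_nonpos hQx hQy hxy hs))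
    ⟨0, by simp, by simpa using hAx⟩ ⟨1, by simp, by simpa using hBy⟩
  exact ⟨_, hs⟩

theorem isOpen_setOf_exists_convexCombination_neg (A B : QuadraticForm ℝ V) (S : Set V) :
    IsOpen {t : ℝ | ∃ x ∈ S, (1 - t) * A x + t * B x < 0} := by
  have hUnion : {t : ℝ | ∃ x ∈ S, (1 - t) * A x + t * B x < 0} =
      ⋃ x ∈ S, {t : ℝ | (1 - t) * A x + t * B x < 0} := by
    ext t
    simp only [mem_ofPred_eq, mem_iUnion, exists_prop]
  rw [hUnion]
  exact isOpen_biUnion fun x _ => isOpen_lt (by fun_prop) continuous_const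

/-- Yuan's lemma. -/
theorem exists_convexCombination_quadraticForm_nonneg {A B : QuadraticForm ℝ V}
    (hAB : ∀ x, 0 ≤ A x ∨ 0 ≤ B x) :
    ∃ t ∈ Icc (0 : ℝ) 1, ∀ x, 0 ≤ (1 - t) * A x + t * B x := by
  by_contra! hneg
  have hsplit : ∀ t ∈ Icc (0 : ℝ) 1, ∀ x, (1 - t) * A x + t * B x < 0 → A x < 0 ∨ B x < 0 := by
    intro t ht x hx
    by_contra! hx'
    have := mul_nonneg (sub_nonneg.2 ht.2) hx'.1
    have := mul_nonneg ht.1 hx'.2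
    linarith
  obtain ⟨t, ht, ⟨x, hAx, hx⟩, ⟨y, hBy, hy⟩⟩ := isPreconnected_Icc (a := (0 : ℝ)) (b := 1) _ _
    (isOpen_setOf_exists_convexCombination_neg A B {x | A x < 0})
    (isOpen_setOf_exists_convexCombination_neg A B {x | B x < 0})
    (fun t ht => by
      obtain ⟨x, hx⟩ := hneg t ht
      exact (hsplit t ht x hx).imp (fun h => ⟨x, h, hx⟩) (fun h => ⟨x, h, hx⟩))
    (by
      obtain ⟨x, hx⟩ := hneg 0 (by simp)
      exact ⟨0, by simp, x, by simpa using hx, hx⟩)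
    (by
      obtain ⟨x, hx⟩ := hneg 1 (by simp)
      exact ⟨1, by simp, x, by simpa using hx, hx⟩)
  obtain ⟨z, hAz, hBz⟩ := exists_quadraticForm_neg_and_neg (Q := (1 - t) • A + t • B)
    (hsplit t ht) hx hy hAx hBy
  exact (hAB z).elim hAz.not_ge hBz.not_ge

end YuanLemma

section ConvexDuality

variable {E ι κ : Type*}

theorem isOpen_setOf_exists_forall_lt [Finite κ] (s : Set E) (φ : κ → E → ℝ) :
    IsOpen {y : κ → ℝ | ∃ x ∈ s, ∀ j, φ j x < y j} := by
  have hUnion : {y : κ → ℝ | ∃ x ∈ s, ∀ j, φ j x < y j} =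
      ⋃ x ∈ s, univ.pi fun j => Ioi (φ j x) := by
    ext y
    simp only [mem_ofPred_eq, mem_iUnion, mem_univ_pi, mem_Ioi, exists_prop]
  rw [hUnion]
  exact isOpen_biUnion fun x _ => isOpen_set_pi finite_univ fun j _ => isOpen_Ioi

variable [AddCommGroup E] [Module ℝ E]

theorem convex_setOf_exists_forall_lt {s : Set E} {φ : κ → E → ℝ} (hs : Convex ℝ s)
    (hφ : ∀ j, ConvexOn ℝ s (φ j)) : Convex ℝ {y : κ → ℝ | ∃ x ∈ s, ∀ j, φ j x < y j} := by
  rintro y ⟨x, hx, hxy⟩ y' ⟨x', hx', hxy'⟩ a b ha hb hab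
  exact ⟨a • x + b • x', hs hx hx' ha hb hab, fun j =>
    ((hφ j).convex_strict_epigraph (x := (x, y j)) ⟨hx, hxy j⟩ (y := (x', y' j)) ⟨hx', hxy' j⟩
      ha hb hab).2⟩

variable [Fintype ι] [Fintype κ]

theorem exists_nonneg_sum_mul_pos_of_isUpperSet {C : Set (κ → ℝ)} (hconv : Convex ℝ C)
    (hopen : IsOpen C) (hupper : IsUpperSet C) (hne : C.Nonempty) (h0 : 0 ∉ C) :
    ∃ μ : κ → ℝ, 0 ≤ μ ∧ ∀ y ∈ C, 0 < ∑ j, μ j * y j := by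
  obtain ⟨ℓ, hℓ⟩ := geometric_hahn_banach_point_open hconv hopen h0
  have hpos : ∀ y ∈ C, 0 < ℓ y := fun y hy => by simpa using hℓ y hy
  obtain ⟨y₀, hy₀⟩ := hne
  refine ⟨fun j => ℓ (Pi.single j 1), fun j => ?_, fun y hy => ?_⟩
  · change 0 ≤ ℓ (Pi.single j 1)
    by_contra! hj
    set r : ℝ := ℓ y₀ / -ℓ (Pi.single j 1) with hr
    have hr0 : 0 ≤ r := div_nonneg (hpos y₀ hy₀).le (neg_nonneg.2 hj.le)
    have hle : y₀ ≤ y₀ + r • Pi.single j 1 :=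
      le_add_of_nonneg_right (smul_nonneg hr0 (Pi.single_nonneg.2 zero_le_one))
    refine (hpos _ (hupper hle hy₀)).ne' ?_
    rw [map_add, map_smul, smul_eq_mul, hr, div_neg, neg_mul, div_mul_cancel₀ _ hj.ne,
      add_neg_cancel]
  · refine (hpos y hy).trans_eq ?_
    conv_lhs => rw [pi_eq_sum_univ' y]
    simp only [map_sum, map_smul, smul_eq_mul, mul_comm]

/-- Gordan's alternative for convex functions. -/
theorem exists_nonneg_sum_mul_convexOn_nonneg {s : Set E} {φ : κ → E → ℝ} (hs : s.Nonempty)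
    (hφ : ∀ j, ConvexOn ℝ s (φ j)) (hpos : ∀ x ∈ s, ∃ j, 0 ≤ φ j x) :
    ∃ μ : κ → ℝ, 0 ≤ μ ∧ μ ≠ 0 ∧ ∀ x ∈ s, 0 ≤ ∑ j, μ j * φ j x := by
  obtain ⟨x₀, hx₀⟩ := hs
  obtain ⟨j₀, -⟩ := hpos x₀ hx₀
  have hmem : ∀ x ∈ s, ∀ ε > 0, (fun j => φ j x + ε) ∈ {y : κ → ℝ | ∃ x ∈ s, ∀ j, φ j x < y j} :=
    fun x hx ε hε => ⟨x, hx, fun j => lt_add_of_pos_right _ hε⟩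
  obtain ⟨μ, hμ, hμ_pos⟩ := exists_nonneg_sum_mul_pos_of_isUpperSet
    (convex_setOf_exists_forall_lt (hφ j₀).1 hφ) (isOpen_setOf_exists_forall_lt s φ)
    (fun y y' hyy' ⟨x, hx, hlt⟩ => ⟨x, hx, fun j => (hlt j).trans_le (hyy' j)⟩)
    ⟨_, hmem x₀ hx₀ 1 one_pos⟩
    (fun ⟨x, hx, hlt⟩ => by
      obtain ⟨j, hj⟩ := hpos x hx
      exact (hlt j).not_ge hj)
  refine ⟨μ, hμ, fun hzero => ?_, fun x hx => ?_⟩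
  · simpa [hzero] using hμ_pos _ (hmem x₀ hx₀ 1 one_pos)
  · have hlim : Tendsto (fun ε : ℝ => ∑ j, μ j * (φ j x + ε)) (𝓝[>] 0)
        (𝓝 (∑ j, μ j * φ j x)) := by
      have hcont : Continuous fun ε : ℝ => ∑ j, μ j * (φ j x + ε) := by fun_prop
      simpa using (hcont.tendsto 0).mono_left nhdsWithin_le_nhds
    refine ge_of_tendsto hlim ?_
    filter_upwards [self_mem_nhdsWithin] with ε hε using (hμ_pos _ (hmem x hx ε hε)).le

theorem exists_multiplier_of_slater {s : Set E} {φ₀ : E → ℝ} {φ : κ → E → ℝ}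
    (hφ₀ : ConvexOn ℝ s φ₀) (hφ : ∀ j, ConvexOn ℝ s (φ j))
    (hslater : ∃ x ∈ s, ∀ j, φ j x < 0)
    (hmin : ∀ x ∈ s, (∀ j, φ j x < 0) → 0 ≤ φ₀ x) :
    ∃ μ : κ → ℝ, 0 ≤ μ ∧ ∀ x ∈ s, 0 ≤ φ₀ x + ∑ j, μ j * φ j x := by
  obtain ⟨x₀, hx₀, hneg⟩ := hslater
  obtain ⟨ν, hν, hν0, hsum⟩ := exists_nonneg_sum_mul_convexOn_nonneg (s := s)
    (φ := fun o : Option κ => o.elim φ₀ φ) ⟨x₀, hx₀⟩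
    (by rintro (_ | j); exacts [hφ₀, hφ j])
    (fun x hx => by
      by_contra! hlt
      exact (hlt none).not_ge (hmin x hx fun j => hlt (some j)))
  simp only [Fintype.sum_option, Option.elim_none, Option.elim_some] at hsum
  have hnone : 0 < ν none := by
    refine (hν none).lt_of_ne fun hzero => hν0 ?_
    have hterm : ∀ j ∈ Finset.univ, ν (some j) * φ j x₀ ≤ 0 := fun j _ =>
      mul_nonpos_of_nonneg_of_nonpos (hν (some j)) (hneg j).le
    have hsum₀ : ∑ j, ν (some j) * φ j x₀ = 0 :=
      (Finset.sum_nonpos hterm).antisymm (by simpa [← hzero] using hsum x₀ hx₀)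
    ext (_ | j)
    · exact hzero.symm
    · exact (mul_eq_zero.1 ((Finset.sum_eq_zero_iff_of_nonpos hterm).1 hsum₀ j
        (Finset.mem_univ j))).resolve_right (hneg j).ne
  refine ⟨fun j => (ν none)⁻¹ * ν (some j),
    fun j => mul_nonneg (inv_nonneg.2 hnone.le) (hν (some j)), fun x hx => ?_⟩
  calc 0 ≤ (ν none)⁻¹ * (ν none * φ₀ x + ∑ j, ν (some j) * φ j x) :=
        mul_nonneg (inv_nonneg.2 hnone.le) (hsum x hx)
    _ = φ₀ x + ∑ j, (ν none)⁻¹ * ν (some j) * φ j x := by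
        rw [mul_add, inv_mul_cancel_left₀ hnone.ne', Finset.mul_sum]
        simp only [mul_assoc]

theorem exists_multiplier_of_slater_on (J : Set κ) {s : Set E} {φ₀ : E → ℝ} {φ : κ → E → ℝ}
    (hφ₀ : ConvexOn ℝ s φ₀) (hφ : ∀ j ∈ J, ConvexOn ℝ s (φ j))
    (hslater : ∃ x ∈ s, ∀ j ∈ J, φ j x < 0)
    (hmin : ∀ x ∈ s, (∀ j ∈ J, φ j x < 0) → 0 ≤ φ₀ x) :
    ∃ μ : κ → ℝ, 0 ≤ μ ∧ (∀ j ∉ J, μ j = 0) ∧ ∀ x ∈ s, 0 ≤ φ₀ x + ∑ j, μ j * φ j x := by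
  obtain ⟨ν, hν, hsum⟩ := exists_multiplier_of_slater (φ := fun j : J => φ j) hφ₀
    (fun j => hφ j j.2) (by simpa using hslater) (by simpa using hmin)
  have hzero : ∀ j ∉ J, Function.extend Subtype.val ν 0 j = 0 := fun j hj =>
    Function.extend_apply' _ _ _ (by rintro ⟨k, rfl⟩; exact hj k.2)
  have hext : ∀ j : J, Function.extend Subtype.val ν 0 j = ν j :=
    Subtype.val_injective.extend_apply ν 0
  refine ⟨Function.extend Subtype.val ν 0, fun j => ?_, hzero, fun x hx => ?_⟩
  · by_cases hj : j ∈ J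
    · exact (hν ⟨j, hj⟩).trans_eq (hext ⟨j, hj⟩).symm
    · exact (hzero j hj).ge
  · rw [← Fintype.sum_of_injective Subtype.val Subtype.val_injective (fun j : J => ν j * φ j x)]
    · exact hsum x hx
    · intro j hj
      rw [hzero j (by simpa using hj), zero_mul]
    · exact fun j => by rw [hext]

theorem exists_multiplier_of_affine_nonneg {ℓ : Module.Dual ℝ E} {c : ℝ} {a : ι → Module.Dual ℝ E}
    {r : ι → ℝ} (hfeas : ∃ z, ∀ i, a i z + r i = 0)
    (hnonneg : ∀ z, (∀ i, a i z + r i = 0) → 0 ≤ ℓ z + c) :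
    ∃ lam : ι → ℝ, ℓ + ∑ i, lam i • a i = 0 ∧ 0 ≤ c + ∑ i, lam i * r i := by
  obtain ⟨z₀, hz₀⟩ := hfeas
  have hker : ⨅ i, LinearMap.ker (a i) ≤ LinearMap.ker ℓ := by
    intro w hw
    simp only [Submodule.mem_iInf, LinearMap.mem_ker] at hw ⊢
    by_contra hne
    have := hnonneg (z₀ - ((ℓ z₀ + c + 1) / ℓ w) • w) fun i => by simp [hw i, hz₀ i]
    rw [map_sub, map_smul, smul_eq_mul, div_mul_cancel₀ _ hne] at this
    linarith
  obtain ⟨lam, hlam⟩ := (Submodule.mem_span_range_iff_exists_fun ℝ).1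
    (mem_span_of_iInf_ker_le_ker hker)
  refine ⟨-lam, ?_, ?_⟩
  · ext z
    simp [← hlam]
  · have hℓz₀ : ℓ z₀ = -∑ i, lam i * r i := by
      rw [← hlam, LinearMap.sum_apply, ← Finset.sum_neg_distrib]
      refine Finset.sum_congr rfl fun i _ => ?_
      rw [LinearMap.smul_apply, smul_eq_mul, eq_neg_of_add_eq_zero_left (hz₀ i), mul_neg]
    have := hnonneg z₀ hz₀
    simp only [Pi.neg_apply, neg_mul, Finset.sum_neg_distrib]
    linarith

end ConvexDuality

theorem surjective_pi_of_linearIndependent {K V ι : Type*} [Field K] [AddCommGroup V] [Module K V]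
    [Finite ι] {a : ι → Module.Dual K V} (ha : LinearIndependent K a) :
    Function.Surjective (LinearMap.pi a) := by
  have := Fintype.ofFinite ι
  rw [← LinearMap.dualMap_injective_iff, injective_iff_map_eq_zero]
  intro φ hφ
  have hsum : ∑ i, φ (Pi.single i 1) • a i = 0 := by
    ext z
    have hz : φ (LinearMap.pi a z) = 0 := congr($hφ z)
    rw [pi_eq_sum_univ' (LinearMap.pi a z)] at hz
    simpa [mul_comm] using hz
  ext i
  simpa using Fintype.linearIndependent_iff.1 ha _ hsum i

section ParabolicArc

variable {E F : Type*} [NormedAddCommGroup E] [NormedSpace ℝ E] [NormedAddCommGroup F]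
  [NormedSpace ℝ F] {φ : E → F} {x d z : E} {ζ : ℝ → E}

theorem isLittleO_sub_taylor_two (hφ : ContDiffAt ℝ 2 φ x) :
    (fun y => φ y - φ x - fderiv ℝ φ x (y - x)
      - (1 / 2 : ℝ) • fderiv ℝ (fderiv ℝ φ) x (y - x) (y - x)) =o[𝓝 x] fun y => ‖y - x‖ ^ 2 := by
  set D := fderiv ℝ (fderiv ℝ φ) x
  have hsymm : ∀ v w, D v w = D w v := hφ.isSymmSndFDerivAt (by simp)
  have hD : HasFDerivAt (fderiv ℝ φ) D x :=
    ((hφ.fderiv_right le_rfl).differentiableAt one_ne_zero).hasFDerivAt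
  obtain ⟨ε, hε, hball⟩ := Metric.eventually_nhds_iff_ball.1 (hφ.eventually (by simp))
  have hR : ∀ y ∈ Metric.ball x ε, HasFDerivWithinAt
      (fun y => φ y - fderiv ℝ φ x (y - x) - (1 / 2 : ℝ) • D (y - x) (y - x))
      (fderiv ℝ φ y - fderiv ℝ φ x - D (y - x)) (Metric.ball x ε) y := fun y hy => by
    have hsub : HasFDerivAt (fun y => y - x) (ContinuousLinearMap.id ℝ E) y :=
      (hasFDerivAt_id y).sub_const x
    have hquad := (D.hasFDerivAt.comp y hsub).clm_apply hsub
    refine (((((hball y hy).differentiableAt two_ne_zero).hasFDerivAt.sub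
      ((fderiv ℝ φ x).hasFDerivAt.comp y hsub)).sub
      (hquad.const_smul (1 / 2 : ℝ))).congr_fderiv ?_).hasFDerivWithinAt
    ext v
    norm_num [hsymm v, ← add_smul]
  have := (convex_ball x ε).isLittleO_pow_succ (n := 1) (Metric.mem_ball_self hε) hR
    (by simpa using (hD.isLittleO.norm_right).mono nhdsWithin_le_nhds)
  rw [Metric.isOpen_ball.nhdsWithin_eq (Metric.mem_ball_self hε)] at this
  refine this.congr_left fun y => ?_
  simp only [sub_self, map_zero, smul_zero, sub_zero]
  abel

/-- The curve `t ↦ x + t d + (t² / 2) ζ(t)`, tangent to `d` at `x`, with second-order direction the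
limit of `ζ` at `0⁺`. -/
def parabolicArc (x d : E) (ζ : ℝ → E) (t : ℝ) : E :=
  x + t • d + (t ^ 2 / 2) • ζ t

/-- The parabolic second-order derivative `φ'(x) z + φ''(x)(d, d)`: the second derivative at `0⁺` of
`φ` along any `parabolicArc x d ζ` with `ζ → z`. -/
def parabolicDeriv (φ : E → F) (x d z : E) : F :=
  fderiv ℝ φ x z + fderiv ℝ (fderiv ℝ φ) x d d

theorem parabolicArc_eq (x d : E) (ζ : ℝ → E) (t : ℝ) :
    parabolicArc x d ζ t = x + t • (d + (t / 2) • ζ t) := by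
  rw [parabolicArc, smul_add, smul_smul, add_assoc, show t * (t / 2) = t ^ 2 / 2 by ring]

theorem tendsto_parabolicArc_velocity (hζ : Tendsto ζ (𝓝[>] 0) (𝓝 z)) :
    Tendsto (fun t => d + (t / 2) • ζ t) (𝓝[>] 0) (𝓝 d) := by
  have ht : Tendsto (fun t : ℝ => t / 2) (𝓝[>] 0) (𝓝 0) := by
    simpa using (tendsto_id (x := 𝓝 (0 : ℝ))).div_const 2 |>.mono_left nhdsWithin_le_nhds
  simpa using (ht.smul hζ).const_add d

theorem tendsto_parabolicArc (hζ : Tendsto ζ (𝓝[>] 0) (𝓝 z)) :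
    Tendsto (parabolicArc x d ζ) (𝓝[>] 0) (𝓝 x) := by
  have ht : Tendsto (fun t : ℝ => t) (𝓝[>] 0) (𝓝 0) := tendsto_id.mono_left nhdsWithin_le_nhds
  simpa only [← parabolicArc_eq, zero_smul, add_zero] using
    (ht.smul (tendsto_parabolicArc_velocity (d := d) hζ)).const_add x

theorem tendsto_slope_parabolicArc (hφ : DifferentiableAt ℝ φ x)
    (hζ : Tendsto ζ (𝓝[>] 0) (𝓝 z)) :
    Tendsto (fun t => t⁻¹ • (φ (parabolicArc x d ζ t) - φ x)) (𝓝[>] 0) (𝓝 (fderiv ℝ φ x d)) := by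
  have harc : Tendsto (fun t => parabolicArc x d ζ t - x) (𝓝[>] 0) (𝓝 0) := by
    simpa using (tendsto_parabolicArc (x := x) (d := d) hζ).sub_const x
  have hslope : Tendsto (fun t : ℝ => t⁻¹ • (parabolicArc x d ζ t - x)) (𝓝[>] 0) (𝓝 d) := by
    refine (tendsto_parabolicArc_velocity hζ).congr' ?_
    filter_upwards [self_mem_nhdsWithin] with t (ht : 0 < t)
    rw [parabolicArc_eq, add_sub_cancel_left, inv_smul_smul₀ ht.ne']
  simpa using (hφ.hasFDerivAt.hasFDerivWithinAt (s := univ)).lim harc (by simp) hslope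

theorem tendsto_second_difference_parabolicArc (hφ : ContDiffAt ℝ 2 φ x)
    (hζ : Tendsto ζ (𝓝[>] 0) (𝓝 z)) :
    Tendsto (fun t : ℝ => (2 / t ^ 2) • (φ (parabolicArc x d ζ t) - φ x - t • fderiv ℝ φ x d))
      (𝓝[>] 0) (𝓝 (parabolicDeriv φ x d z)) := by
  set D := fderiv ℝ (fderiv ℝ φ) x with hD
  have hvel := tendsto_parabolicArc_velocity (d := d) hζ
  have hsub : ∀ t, parabolicArc x d ζ t - x = t • (d + (t / 2) • ζ t) := fun t => by
    rw [parabolicArc_eq, add_sub_cancel_left]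
  have hbig : (fun t => ‖parabolicArc x d ζ t - x‖ ^ 2) =O[𝓝[>] 0] fun t : ℝ => t ^ 2 := by
    refine IsBigO.pow (IsBigO.norm_left ?_) 2
    simpa [hsub] using (isBigO_refl (fun t : ℝ => t) (𝓝[>] 0)).smul (hvel.isBigO_one ℝ)
  have hrem := (((isLittleO_sub_taylor_two hφ).comp_tendsto
    (tendsto_parabolicArc hζ)).trans_isBigO hbig).tendsto_inv_smul_nhds_zero.const_smul (2 : ℝ)
  have hquad : Tendsto (fun t => fderiv ℝ φ x (ζ t) + D (d + (t / 2) • ζ t) (d + (t / 2) • ζ t))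
      (𝓝[>] 0) (𝓝 (parabolicDeriv φ x d z)) :=
    (((fderiv ℝ φ x).continuous.tendsto z).comp hζ).add
      (((show Continuous fun v => D v v by fun_prop).tendsto d).comp hvel)
  have hsum := hrem.add hquad
  rw [smul_zero, zero_add] at hsum
  refine hsum.congr' ?_
  filter_upwards [self_mem_nhdsWithin] with t (ht : 0 < t)
  simp only [Function.comp_apply, hsub, map_smul, map_add, _root_.smul_apply,
    _root_.add_apply, smul_add, smul_sub, ← hD]
  match_scalars <;> field_simp <;> ring

theorem eventually_neg_along_parabolicArc {g : E → ℝ} (hg : ContDiffAt ℝ 2 g x) (hgx : g x ≤ 0)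
    (hd : g x = 0 → fderiv ℝ g x d ≤ 0)
    (hz : g x = 0 → fderiv ℝ g x d = 0 → parabolicDeriv g x d z < 0)
    (hζ : Tendsto ζ (𝓝[>] 0) (𝓝 z)) : ∀ᶠ t in 𝓝[>] 0, g (parabolicArc x d ζ t) < 0 := by
  rcases hgx.lt_or_eq with hneg | hzero
  · exact ((hg.continuousAt.tendsto.comp (tendsto_parabolicArc hζ)).eventually_lt_const hneg)
  rcases (hd hzero).lt_or_eq with hdneg | hdzero
  · filter_upwards [(tendsto_slope_parabolicArc (hg.differentiableAt two_ne_zero)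
      hζ).eventually_lt_const hdneg, self_mem_nhdsWithin] with t hneg (ht : 0 < t)
    rw [hzero, sub_zero, smul_eq_mul] at hneg
    exact neg_of_mul_neg_right hneg (inv_nonneg.2 ht.le)
  · filter_upwards [(tendsto_second_difference_parabolicArc hg hζ).eventually_lt_const
      (hz hzero hdzero), self_mem_nhdsWithin] with t hneg (ht : 0 < t)
    rw [hzero, hdzero, smul_zero, sub_zero, sub_zero, smul_eq_mul] at hneg
    exact neg_of_mul_neg_right hneg (by positivity)

end ParabolicArc

section ZeroSetArc

variable {E F : Type*} [NormedAddCommGroup E] [NormedSpace ℝ E] [CompleteSpace E]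
  [NormedAddCommGroup F] [NormedSpace ℝ F] [CompleteSpace F]

/-- The Lyusternik–Graves error bound. -/
theorem exists_dist_zero_le_of_hasStrictFDerivAt {H : E → F} {H' : E →L[ℝ] F} {x : E}
    (hH : HasStrictFDerivAt H H' x) (hsurj : H'.range = ⊤) (hx : H x = 0) :
    ∃ C : ℝ, ∀ᶠ y in 𝓝 x, ∃ y', H y' = 0 ∧ ‖y' - y‖ ≤ C * ‖H y‖ := by
  set R := H'.nonlinearRightInverseOfSurjective hsurj
  have hR : 0 < R.nnnorm := H'.nonlinearRightInverseOfSurjective_nnnorm_pos hsurj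
  obtain ⟨s, hs, happrox⟩ := hH.approximates_deriv_on_nhds (c := R.nnnorm⁻¹ / 2)
    (Or.inr (by positivity))
  obtain ⟨ε, hε, hball⟩ := Metric.mem_nhds_iff.1 hs
  have hsmall : Tendsto (fun y => 2 * R.nnnorm * ‖H y‖) (𝓝 x) (𝓝 0) := by
    simpa [hx] using (hH.continuousAt.norm.const_mul (2 * R.nnnorm : ℝ)).tendsto
  refine ⟨2 * R.nnnorm, ?_⟩
  filter_upwards [Metric.ball_mem_nhds x (half_pos hε), hsmall.eventually_lt_const (half_pos hε)]
    with y hy hHy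
  have hsub : Metric.closedBall y (2 * R.nnnorm * ‖H y‖) ⊆ s := fun w hw => hball <| by
    rw [Metric.mem_ball] at hy ⊢
    rw [Metric.mem_closedBall] at hw
    linarith [dist_triangle w y x]
  obtain ⟨y', hy', hzero⟩ := happrox.surjOn_closedBall_of_nonlinearRightInverse R
    (by positivity) hsub (a := 0) (by
      rw [Metric.mem_closedBall, dist_zero_left]
      refine le_of_eq ?_
      push_cast
      field_simp
      ring)
  exact ⟨y', hzero, by rwa [← dist_eq_norm]⟩

-- Along the parabola with constant `ζ = z`, the map `H` is `o(t²)`, so the error bound reaches the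
-- zero set by a displacement of order `o(t²)`.
theorem exists_tendsto_parabolicArc_mem_zeros {H : E → F} {x d z : E} (hH : ContDiffAt ℝ 2 H x)
    (hsurj : (fderiv ℝ H x).range = ⊤) (hx : H x = 0) (hd : fderiv ℝ H x d = 0)
    (hz : parabolicDeriv H x d z = 0) :
    ∃ ζ : ℝ → E, Tendsto ζ (𝓝[>] 0) (𝓝 z) ∧ ∀ᶠ t in 𝓝[>] 0, H (parabolicArc x d ζ t) = 0 := by
  obtain ⟨C, hC⟩ := exists_dist_zero_le_of_hasStrictFDerivAt
    (hH.hasStrictFDerivAt two_ne_zero) hsurj hx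
  obtain ⟨y, hy⟩ := ((tendsto_parabolicArc (x := x) (d := d)
    (tendsto_const_nhds (x := z))).eventually hC).choice
  set ζ : ℝ → E := fun t => z + (2 / t ^ 2) • (y t - parabolicArc x d (fun _ => z) t) with hζ
  have hres : Tendsto (fun t : ℝ => C * ‖(2 / t ^ 2) • H (parabolicArc x d (fun _ => z) t)‖)
      (𝓝[>] 0) (𝓝 0) := by
    simpa [hx, hd, hz] using ((tendsto_second_difference_parabolicArc (d := d) hH
      (tendsto_const_nhds (x := z))).norm.const_mul C)
  refine ⟨ζ, ?_, ?_⟩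
  · refine tendsto_iff_norm_sub_tendsto_zero.2 (squeeze_zero' (by simp) ?_ hres)
    filter_upwards [hy] with t ht
    rw [hζ, add_sub_cancel_left, norm_smul, norm_smul, mul_left_comm]
    exact mul_le_mul_of_nonneg_left ht.2 (norm_nonneg _)
  · filter_upwards [hy, self_mem_nhdsWithin] with t ht (ht0 : 0 < t)
    rw [← ht.1]
    congr 1
    simp only [hζ, parabolicArc]
    match_scalars <;> field_simp <;> ring

end ZeroSetArc

section ParabolicDeriv

variable {E F : Type*} [NormedAddCommGroup E] [NormedSpace ℝ E] [NormedAddCommGroup F]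
  [NormedSpace ℝ F]

theorem parabolicDeriv_pi_apply {ι : Type*} [Fintype ι] {H : E → ι → ℝ} {x : E}
    (hH : ContDiffAt ℝ 2 H x) (d z : E) (i : ι) :
    parabolicDeriv H x d z i = parabolicDeriv (fun y => H y i) x d z := by
  have hlim := tendsto_pi_nhds.1 (tendsto_second_difference_parabolicArc (d := d) hH
    (tendsto_const_nhds (x := z))) i
  have hd : fderiv ℝ H x d i = fderiv ℝ (fun y => H y i) x d :=
    congr($(fderiv_apply (hH.differentiableAt two_ne_zero) i) d).symm
  simp only [Pi.smul_apply, Pi.sub_apply, hd] at hlim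
  exact tendsto_nhds_unique hlim (tendsto_second_difference_parabolicArc (contDiffAt_pi.1 hH i)
    tendsto_const_nhds)

theorem parabolicDeriv_add_smul (φ : E → F) (x d z e : E) (r : ℝ) :
    parabolicDeriv φ x d (z + r • e) = parabolicDeriv φ x d z + r • fderiv ℝ φ x e := by
  rw [parabolicDeriv, parabolicDeriv, map_add, map_smul, add_right_comm]

theorem convexOn_parabolicDeriv (φ : E → ℝ) (x d : E) {s : Set E} (hs : Convex ℝ s) :
    ConvexOn ℝ s (parabolicDeriv φ x d) :=
  ((fderiv ℝ φ x).toLinearMap.convexOn hs).add_const _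

theorem convex_setOf_parabolicDeriv_eq_zero (φ : E → ℝ) (x d : E) :
    Convex ℝ {z | parabolicDeriv φ x d z = 0} := by
  simp only [parabolicDeriv, add_eq_zero_iff_eq_neg]
  exact convex_hyperplane (fderiv ℝ φ x).toLinearMap.isLinear _

end ParabolicDeriv

/-- The data of the problem of minimizing `objective` subject to `eqConstraint i = 0` for `i : ι`
and `ineqConstraint j ≤ 0` for `j : κ`. -/
structure NonlinearProgram (E ι κ : Type*) where
  objective : E → ℝ
  eqConstraint : ι → E → ℝ
  ineqConstraint : κ → E → ℝ

namespace NonlinearProgram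

variable {E ι κ : Type*} [NormedAddCommGroup E] [NormedSpace ℝ E]
variable (P : NonlinearProgram E ι κ) {x d : E}

/-- The set of feasible points. -/
def feasibleSet : Set E :=
  {x | (∀ i, P.eqConstraint i x = 0) ∧ ∀ j, P.ineqConstraint j x ≤ 0}

/-- The critical cone `C(x)`. -/
def criticalCone (x : E) : Set E :=
  {d | fderiv ℝ P.objective x d = 0 ∧ (∀ i, fderiv ℝ (P.eqConstraint i) x d = 0) ∧
    ∀ j, P.ineqConstraint j x = 0 → fderiv ℝ (P.ineqConstraint j) x d ≤ 0}

/-- The Mangasarian–Fromovitz constraint qualification at `x`. -/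
def MangasarianFromovitz (x : E) : Prop :=
  LinearIndependent ℝ (fun i => fderiv ℝ (P.eqConstraint i) x) ∧
    ∃ e, (∀ i, fderiv ℝ (P.eqConstraint i) x e = 0) ∧
      ∀ j, P.ineqConstraint j x = 0 → fderiv ℝ (P.ineqConstraint j) x e < 0

/-- The objective and all constraints are twice continuously differentiable near `x`. -/
structure IsC2At (x : E) : Prop where
  objective : ContDiffAt ℝ 2 P.objective x
  eqConstraint : ∀ i, ContDiffAt ℝ 2 (P.eqConstraint i) x
  ineqConstraint : ∀ j, ContDiffAt ℝ 2 (P.ineqConstraint j) x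

/-- The Lagrangian, with the multipliers of the equality and of the inequality constraints bundled
into the pair `l`. -/
def lagrangian [Fintype ι] [Fintype κ] (l : (ι → ℝ) × (κ → ℝ)) (x : E) : ℝ :=
  P.objective x + ∑ i, l.1 i * P.eqConstraint i x + ∑ j, l.2 j * P.ineqConstraint j x

/-- The set `Λ(x)` of Lagrange multipliers at `x`. -/
def multiplierSet [Fintype ι] [Fintype κ] (x : E) : Set ((ι → ℝ) × (κ → ℝ)) :=
  {l | (∀ j, 0 ≤ l.2 j) ∧ fderiv ℝ (P.lagrangian l) x = 0 ∧ ∀ j, l.2 j * P.ineqConstraint j x = 0}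

/-- The Hessian at `x` of the Lagrangian, as a quadratic form. -/
def lagrangianHessian [Fintype ι] [Fintype κ] (x : E) (l : (ι → ℝ) × (κ → ℝ)) :
    QuadraticForm ℝ E :=
  LinearMap.BilinMap.toQuadraticMap (fderiv ℝ (fderiv ℝ (P.lagrangian l)) x).toLinearMap₁₂

variable {P}

theorem surjective_fderiv_eqConstraint [Finite ι]
    (hind : LinearIndependent ℝ fun i => fderiv ℝ (P.eqConstraint i) x) :
    Function.Surjective fun z i => fderiv ℝ (P.eqConstraint i) x z :=
  surjective_pi_of_linearIndependent (hind.map' (ContinuousLinearMap.coeLM ℝ)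
    (LinearMap.ker_eq_bot.2 ContinuousLinearMap.coe_injective))

theorem IsC2At.eventually [Finite ι] [Finite κ] (hP : P.IsC2At x) : ∀ᶠ y in 𝓝 x, P.IsC2At y := by
  filter_upwards [hP.objective.eventually (by simp),
    eventually_all.2 fun i => (hP.eqConstraint i).eventually (by simp),
    eventually_all.2 fun j => (hP.ineqConstraint j).eventually (by simp)] with y hf hh hg
  exact ⟨hf, hh, hg⟩

section Primal

variable [Finite ι] [Finite κ] {z : E}

theorem exists_feasible_parabolicArc [CompleteSpace E] (hP : P.IsC2At x) (hx : x ∈ P.feasibleSet)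
    (hind : LinearIndependent ℝ fun i => fderiv ℝ (P.eqConstraint i) x)
    (hd : d ∈ P.criticalCone x) (hz : ∀ i, parabolicDeriv (P.eqConstraint i) x d z = 0)
    (hz_neg : ∀ j, P.ineqConstraint j x = 0 → fderiv ℝ (P.ineqConstraint j) x d = 0 →
      parabolicDeriv (P.ineqConstraint j) x d z < 0) :
    ∃ ζ : ℝ → E, Tendsto ζ (𝓝[>] 0) (𝓝 z) ∧
      ∀ᶠ t in 𝓝[>] 0, parabolicArc x d ζ t ∈ P.feasibleSet := by
  have := Fintype.ofFinite ι
  have hH : ContDiffAt ℝ 2 (fun y i => P.eqConstraint i y) x := contDiffAt_pi.2 hP.eqConstraint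
  have hH' : ∀ v, fderiv ℝ (fun y i => P.eqConstraint i y) x v =
      fun i => fderiv ℝ (P.eqConstraint i) x v := fun v =>
    funext fun i => congr($(fderiv_apply (hH.differentiableAt two_ne_zero) i) v).symm
  obtain ⟨ζ, hζ, hzero⟩ := exists_tendsto_parabolicArc_mem_zeros (d := d) (z := z) hH
    (LinearMap.range_eq_top.2 fun y => (surjective_fderiv_eqConstraint hind y).imp fun v hv =>
      (hH' v).trans hv)
    (funext hx.1) ((hH' d).trans (funext hd.2.1))
    (funext fun i => (parabolicDeriv_pi_apply hH d z i).trans (hz i))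
  refine ⟨ζ, hζ, ?_⟩
  filter_upwards [hzero, eventually_all.2 fun j => eventually_neg_along_parabolicArc
    (hP.ineqConstraint j) (hx.2 j) (hd.2.2 j) (hz_neg j) hζ] with t heq hlt
  exact ⟨fun i => congrFun heq i, fun j => (hlt j).le⟩

theorem parabolicDeriv_objective_nonneg [CompleteSpace E] (hP : P.IsC2At x)
    (hx : x ∈ P.feasibleSet) (hmin : IsLocalMinOn P.objective P.feasibleSet x)
    (hind : LinearIndependent ℝ fun i => fderiv ℝ (P.eqConstraint i) x)
    (hd : d ∈ P.criticalCone x) (hz : ∀ i, parabolicDeriv (P.eqConstraint i) x d z = 0)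
    (hz_neg : ∀ j, P.ineqConstraint j x = 0 → fderiv ℝ (P.ineqConstraint j) x d = 0 →
      parabolicDeriv (P.ineqConstraint j) x d z < 0) :
    0 ≤ parabolicDeriv P.objective x d z := by
  obtain ⟨ζ, hζ, hfeas⟩ := exists_feasible_parabolicArc hP hx hind hd hz hz_neg
  have hge : ∀ᶠ t in 𝓝[>] 0, P.objective x ≤ P.objective (parabolicArc x d ζ t) :=
    (tendsto_nhdsWithin_iff.2 ⟨tendsto_parabolicArc hζ, hfeas⟩).eventually hmin
  refine ge_of_tendsto (tendsto_second_difference_parabolicArc hP.objective hζ) ?_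
  filter_upwards [hge] with t ht
  rw [hd.1, smul_zero, sub_zero]
  exact smul_nonneg (by positivity) (sub_nonneg.2 ht)

theorem MangasarianFromovitz.exists_parabolicDeriv_neg (hmfcq : P.MangasarianFromovitz x) (d : E) :
    ∃ z, (∀ i, parabolicDeriv (P.eqConstraint i) x d z = 0) ∧
      ∀ j, P.ineqConstraint j x = 0 → parabolicDeriv (P.ineqConstraint j) x d z < 0 := by
  obtain ⟨hind, e, he_eq, he_neg⟩ := hmfcq
  obtain ⟨z, hz⟩ := surjective_fderiv_eqConstraint hind
    fun i => -fderiv ℝ (fderiv ℝ (P.eqConstraint i)) x d d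
  have hlarge : ∀ᶠ r : ℝ in atTop, ∀ j, P.ineqConstraint j x = 0 →
      parabolicDeriv (P.ineqConstraint j) x d (z + r • e) < 0 := by
    refine eventually_all.2 fun j => eventually_imp_distrib_left.2 fun hj => ?_
    simp only [parabolicDeriv_add_smul, smul_eq_mul]
    exact (tendsto_atBot_add_const_left _ _
      (tendsto_id.atTop_mul_const_of_neg (he_neg j hj))).eventually_lt_atBot 0
  obtain ⟨r, hr⟩ := hlarge.exists
  refine ⟨z + r • e, fun i => ?_, hr⟩
  rw [parabolicDeriv_add_smul, he_eq, smul_zero, add_zero]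
  exact add_eq_zero_iff_eq_neg.2 (congrFun hz i)

end Primal

-- As a function of `z`, the second-order condition is a convex program with nonnegative value, for
-- which MFCQ provides a Slater point. Only its inequality constraints are dualized here, over the
-- affine set cut out by its equality constraints.
theorem exists_nonneg_parabolicDeriv_add_sum_nonneg [Finite ι] [Fintype κ] [CompleteSpace E]
    (hP : P.IsC2At x) (hx : x ∈ P.feasibleSet) (hmin : IsLocalMinOn P.objective P.feasibleSet x)
    (hmfcq : P.MangasarianFromovitz x) (hd : d ∈ P.criticalCone x) :
    ∃ μ : κ → ℝ, 0 ≤ μ ∧ (∀ j, μ j * P.ineqConstraint j x = 0) ∧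
      ∀ z, (∀ i, parabolicDeriv (P.eqConstraint i) x d z = 0) →
        0 ≤ parabolicDeriv P.objective x d z
          + ∑ j, μ j * parabolicDeriv (P.ineqConstraint j) x d z := by
  set J : Set κ := {j | P.ineqConstraint j x = 0 ∧ fderiv ℝ (P.ineqConstraint j) x d = 0}
  set s : Set E := {z | ∀ i, parabolicDeriv (P.eqConstraint i) x d z = 0} with hs
  have hs_convex : Convex ℝ s := by
    simp only [hs, ofPred_forall]
    exact convex_iInter fun i => convex_setOf_parabolicDeriv_eq_zero (P.eqConstraint i) x d
  obtain ⟨z₀, hz₀, hz₀_neg⟩ := hmfcq.exists_parabolicDeriv_neg d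
  obtain ⟨μ, hμ, hμJ, hμ_nonneg⟩ := exists_multiplier_of_slater_on J
    (convexOn_parabolicDeriv P.objective x d hs_convex)
    (fun j _ => convexOn_parabolicDeriv (P.ineqConstraint j) x d hs_convex)
    ⟨z₀, hz₀, fun j hj => hz₀_neg j hj.1⟩
    (fun z hz hz_neg => parabolicDeriv_objective_nonneg hP hx hmin hmfcq.1 hd hz
      fun j hj hjd => hz_neg j ⟨hj, hjd⟩)
  refine ⟨μ, hμ, fun j => ?_, hμ_nonneg⟩
  by_cases hj : j ∈ J
  · exact mul_eq_zero_of_right _ hj.1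
  · exact mul_eq_zero_of_left (hμJ j hj) _

section Lagrangian

variable [Fintype ι] [Fintype κ]

theorem fderiv_lagrangian (hP : P.IsC2At x) (l : (ι → ℝ) × (κ → ℝ)) :
    fderiv ℝ (P.lagrangian l) x = fderiv ℝ P.objective x
      + ∑ i, l.1 i • fderiv ℝ (P.eqConstraint i) x
      + ∑ j, l.2 j • fderiv ℝ (P.ineqConstraint j) x :=
  (((hP.objective.differentiableAt two_ne_zero).hasFDerivAt.add
    (HasFDerivAt.fun_sum fun i _ =>
      ((hP.eqConstraint i).differentiableAt two_ne_zero).hasFDerivAt.const_smul (l.1 i))).add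
    (HasFDerivAt.fun_sum fun j _ =>
      ((hP.ineqConstraint j).differentiableAt two_ne_zero).hasFDerivAt.const_smul (l.2 j))).fderiv

theorem fderiv_fderiv_lagrangian (hP : P.IsC2At x) (l : (ι → ℝ) × (κ → ℝ)) :
    fderiv ℝ (fderiv ℝ (P.lagrangian l)) x = fderiv ℝ (fderiv ℝ P.objective) x
      + ∑ i, l.1 i • fderiv ℝ (fderiv ℝ (P.eqConstraint i)) x
      + ∑ j, l.2 j • fderiv ℝ (fderiv ℝ (P.ineqConstraint j)) x := by
  have hderiv {φ : E → ℝ} (hφ : ContDiffAt ℝ 2 φ x) :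
      HasFDerivAt (fderiv ℝ φ) (fderiv ℝ (fderiv ℝ φ) x) x :=
    ((hφ.fderiv_right le_rfl).differentiableAt one_ne_zero).hasFDerivAt
  rw [EventuallyEq.fderiv_eq (hP.eventually.mono fun y hy => fderiv_lagrangian hy l)]
  exact (((hderiv hP.objective).add
    (HasFDerivAt.fun_sum fun i _ => (hderiv (hP.eqConstraint i)).const_smul (l.1 i))).add
    (HasFDerivAt.fun_sum fun j _ => (hderiv (hP.ineqConstraint j)).const_smul (l.2 j))).fderiv

theorem lagrangianHessian_apply (hP : P.IsC2At x) (l : (ι → ℝ) × (κ → ℝ)) (d : E) :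
    P.lagrangianHessian x l d = fderiv ℝ (fderiv ℝ P.objective) x d d
      + ∑ i, l.1 i * fderiv ℝ (fderiv ℝ (P.eqConstraint i)) x d d
      + ∑ j, l.2 j * fderiv ℝ (fderiv ℝ (P.ineqConstraint j)) x d d := by
  change fderiv ℝ (fderiv ℝ (P.lagrangian l)) x d d = _
  simp [fderiv_fderiv_lagrangian hP]

theorem lagrangianHessian_segment_apply (hP : P.IsC2At x) (a b : (ι → ℝ) × (κ → ℝ)) (t : ℝ)
    (d : E) : P.lagrangianHessian x ((1 - t) • a + t • b) d =
      (1 - t) * P.lagrangianHessian x a d + t * P.lagrangianHessian x b d := by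
  simp only [lagrangianHessian_apply hP, Prod.fst_add, Prod.snd_add, Prod.smul_fst, Prod.smul_snd,
    Pi.add_apply, Pi.smul_apply, smul_eq_mul, add_mul, Finset.sum_add_distrib, mul_assoc,
    ← Finset.mul_sum]
  ring

theorem exists_multiplier_lagrangianHessian_nonneg [CompleteSpace E] (hP : P.IsC2At x)
    (hx : x ∈ P.feasibleSet) (hmin : IsLocalMinOn P.objective P.feasibleSet x)
    (hmfcq : P.MangasarianFromovitz x) (hd : d ∈ P.criticalCone x) :
    ∃ l ∈ P.multiplierSet x, 0 ≤ P.lagrangianHessian x l d := by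
  obtain ⟨z₀, hz₀, -⟩ := hmfcq.exists_parabolicDeriv_neg d
  obtain ⟨μ, hμ, hμ_compl, hμ_nonneg⟩ :=
    exists_nonneg_parabolicDeriv_add_sum_nonneg hP hx hmin hmfcq hd
  obtain ⟨lam, hlam, hlam_nonneg⟩ := exists_multiplier_of_affine_nonneg
    (ℓ := (fderiv ℝ P.objective x + ∑ j, μ j • fderiv ℝ (P.ineqConstraint j) x).toLinearMap)
    (c := fderiv ℝ (fderiv ℝ P.objective) x d d
      + ∑ j, μ j * fderiv ℝ (fderiv ℝ (P.ineqConstraint j)) x d d)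
    (a := fun i => (fderiv ℝ (P.eqConstraint i) x).toLinearMap)
    (r := fun i => fderiv ℝ (fderiv ℝ (P.eqConstraint i)) x d d) ⟨z₀, hz₀⟩
    (fun z hz => (hμ_nonneg z hz).trans_eq (by
      simp only [parabolicDeriv, mul_add, Finset.sum_add_distrib,
        ContinuousLinearMap.toLinearMap_add, ContinuousLinearMap.toLinearMap_sum,
        ContinuousLinearMap.toLinearMap_smul, LinearMap.add_apply, ContinuousLinearMap.coe_coe,
        LinearMap.coe_sum, LinearMap.coe_smul, Finset.sum_apply, Pi.smul_apply, smul_eq_mul]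
      ring))
  refine ⟨(lam, μ), ⟨hμ, ?_, hμ_compl⟩, ?_⟩
  · ext v
    have hv := congr($hlam v)
    rw [fderiv_lagrangian hP, add_right_comm]
    simpa using hv
  · rw [lagrangianHessian_apply hP, add_right_comm]
    exact hlam_nonneg

theorem lagrangianHessian_nonneg_or_of_segment [CompleteSpace E] (hP : P.IsC2At x)
    (hx : x ∈ P.feasibleSet) (hmin : IsLocalMinOn P.objective P.feasibleSet x)
    (hmfcq : P.MangasarianFromovitz x) {a b : (ι → ℝ) × (κ → ℝ)}
    (hab : P.multiplierSet x = segment ℝ a b) (hd : d ∈ P.criticalCone x) :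
    0 ≤ P.lagrangianHessian x a d ∨ 0 ≤ P.lagrangianHessian x b d := by
  obtain ⟨l, hl, hnonneg⟩ := exists_multiplier_lagrangianHessian_nonneg hP hx hmin hmfcq hd
  rw [hab, segment_eq_image] at hl
  obtain ⟨t, ht, rfl⟩ := hl
  rw [lagrangianHessian_segment_apply hP] at hnonneg
  by_contra! hneg
  exact hnonneg.not_gt
    (convex_Iio (0 : ℝ) hneg.1 hneg.2 (sub_nonneg.2 ht.2) ht.1 (sub_add_cancel 1 t))

end Lagrangian

end NonlinearProgram

theorem IsFirstOrderCone.mem_or_neg_mem_of_mem_span {n : ℕ} {K : Set (Fin n → ℝ)}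
    (hK : IsFirstOrderCone K) {d : Fin n → ℝ} (hd : d ∈ Submodule.span ℝ K) : d ∈ K ∨ -d ∈ K := by
  obtain ⟨W, d₀, rfl⟩ := hK
  have hle : Submodule.span ℝ {x | ∃ w ∈ W, ∃ r : ℝ, 0 ≤ r ∧ x = w + r • d₀} ≤
      W ⊔ Submodule.span ℝ {d₀} := by
    refine Submodule.span_le.2 ?_
    rintro _ ⟨w, hw, r, -, rfl⟩
    exact Submodule.add_mem_sup hw (Submodule.smul_mem _ r (Submodule.mem_span_singleton_self d₀))
  obtain ⟨w, hw, r, rfl⟩ : ∃ w ∈ W, ∃ r : ℝ, w + r • d₀ = d := by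
    simpa [Submodule.mem_sup, Submodule.mem_span_singleton] using hle hd
  rcases le_total 0 r with hr | hr
  · exact Or.inl ⟨w, hw, r, hr, rfl⟩
  · exact Or.inr ⟨-w, W.neg_mem hw, -r, neg_nonneg.2 hr, by module⟩

theorem lagrangianHessian_eq_hessQ {n m p : ℕ} (f : (Fin n → ℝ) → ℝ)
    (h : Fin m → (Fin n → ℝ) → ℝ) (g : Fin p → (Fin n → ℝ) → ℝ) (x : Fin n → ℝ)
    (l : (Fin m → ℝ) × (Fin p → ℝ)) (d : Fin n → ℝ) :
    (NonlinearProgram.mk f h g).lagrangianHessian x l d = hessQ (Lagr f h g l.1 l.2) x d :=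
  (iteratedFDeriv_two_apply _ x ![d, d]).symm

theorem stmt3_general {E ι κ : Type*} [NormedAddCommGroup E] [NormedSpace ℝ E] [CompleteSpace E]
    [Fintype ι] [Fintype κ] (P : NonlinearProgram E ι κ) {x : E} (hP : P.IsC2At x)
    (hx : x ∈ P.feasibleSet) (hmin : IsLocalMinOn P.objective P.feasibleSet x)
    (hmfcq : P.MangasarianFromovitz x) (hseg : ∃ a b, P.multiplierSet x = segment ℝ a b)
    (V : Submodule ℝ E) (hV : ∀ d ∈ V, d ∈ P.criticalCone x ∨ -d ∈ P.criticalCone x) :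
    ∃ l ∈ P.multiplierSet x, ∀ d ∈ V, 0 ≤ P.lagrangianHessian x l d := by
  obtain ⟨a, b, hab⟩ := hseg
  have hendpoint {d : E} (hd : d ∈ P.criticalCone x) :
      0 ≤ P.lagrangianHessian x a d ∨ 0 ≤ P.lagrangianHessian x b d :=
    P.lagrangianHessian_nonneg_or_of_segment hP hx hmin hmfcq hab hd
  obtain ⟨t, ht, hnonneg⟩ := exists_convexCombination_quadraticForm_nonneg
    (A := (P.lagrangianHessian x a).comp V.subtype) (B := (P.lagrangianHessian x b).comp V.subtype)
    (fun d => (hV d d.2).elim hendpoint fun hd => by simpa using hendpoint hd)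
  refine ⟨(1 - t) • a + t • b, ?_, fun d hd => ?_⟩
  · rw [hab, segment_eq_image]
    exact mem_image_of_mem _ ht
  · rw [NonlinearProgram.lagrangianHessian_segment_apply hP]
    exact hnonneg ⟨d, hd⟩

/-- Baccari–Trad: if MFCQ holds at a local minimizer and the multiplier set
is a line segment, then for every first-order cone contained in the critical cone there is
a single Lagrange multiplier whose Hessian quadratic form is nonnegative on the cone. -/
theorem stmt3 {n m p : ℕ} (f : (Fin n → ℝ) → ℝ) (h : Fin m → (Fin n → ℝ) → ℝ)
    (g : Fin p → (Fin n → ℝ) → ℝ)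
    (hf : ContDiff ℝ 2 f) (hh : ∀ i, ContDiff ℝ 2 (h i)) (hg : ∀ j, ContDiff ℝ 2 (g j))
    (xs : Fin n → ℝ) (hfeas : Feas h g xs)
    (hmin : IsLocalMinOn f {x | Feas h g x} xs)
    (hmfcq : MFCQ h g xs)
    (hseg : ∃ a b : (Fin m → ℝ) × (Fin p → ℝ),
      {lm : (Fin m → ℝ) × (Fin p → ℝ) | IsLagMult f h g xs lm.1 lm.2} = segment ℝ a b) :
    ∀ K : Set (Fin n → ℝ), IsFirstOrderCone K → (∀ d ∈ K, critCone f h g xs d) →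
      ∃ (lam : Fin m → ℝ) (mu : Fin p → ℝ), IsLagMult f h g xs lam mu ∧
        ∀ d ∈ K, 0 ≤ hessQ (Lagr f h g lam mu) xs d := by
  intro K hK hKC
  obtain ⟨l, hl, hnonneg⟩ := stmt3_general ⟨f, h, g⟩
    ⟨hf.contDiffAt, fun i => (hh i).contDiffAt, fun j => (hg j).contDiffAt⟩ hfeas hmin hmfcq hseg
    (Submodule.span ℝ K) fun d hd => (hK.mem_or_neg_mem_of_mem_span hd).imp (hKC d) (hKC (-d))
  exact ⟨l.1, l.2, hl, fun d hd =>
    (hnonneg d (Submodule.subset_span hd)).trans_eq (lagrangianHessian_eq_hessQ f h g xs l d)⟩
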